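/- For all natural numbers p and q, the geometric algebra G_{p+4,q+4} is isomorphic as an ℝ-algebra to the algebra of 16×16 matrices with entries in G_{p,q}: G_{p+4,q+4} ≃ₐ[ℝ] Matrix (Fin 16) (Fin 16) G_{p,q}. -/

import Mathlib

noncomputable section

/-- The quadratic form of signature `(p, q)` on `Fin (p + q) → ℝ`:
`Q_{p,q}(x) = Σ_{i<p} x_i² − Σ_{p≤i<p+q} x_i²`. -/
def Q (p q : ℕ) : QuadraticForm ℝ (Fin (p + q) → ℝ) :=
  QuadraticMap.weightedSumSquares ℝ (fun i : Fin (p + q) => if (i : ℕ) < p then (1 : ℝ) else -1)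

/-- The geometric algebra `G_{p,q}`, the Clifford algebra of `Q p q`. -/
abbrev G (p q : ℕ) : Type := CliffordAlgebra (Q p q)

/-!
Over any commutative ring, adjoining a hyperbolic plane `(a, b) ↦ a * b` to a quadratic form `Q₀`
replaces `Cl(Q₀)` by `M₂(Cl(Q₀))`, through `(v, a, b) ↦ !![v, a; b, -v]`. For the inverse, the
standard basis `x, y` of the plane satisfies `x² = y² = 0` and `xy + yx = 1`, so that
`!![xy, x; y, yx]` are matrix units; they commute with the copy of `Cl(Q₀)` generated by the
elements `v(xy - yx)`. Over `ℝ`, raising both `p` and `q` by one adjoins the plane `a² - b²`, which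
is hyperbolic because `2` is invertible, so each such step doubles the size of the matrices.
-/

section MatrixUnits

variable {n A B R : Type*} [Fintype n] [DecidableEq n] [Semiring A]

/-- The entries of `e` are a full system of `n × n` matrix units in `A`: they multiply like the
elementary matrices, and the diagonal ones sum to `1`. -/
structure IsMatrixUnits (e : Matrix n n A) : Prop where
  mul_eq : ∀ i j k l, e i j * e k l = if j = k then e i l else 0
  trace_eq_one : e.trace = 1

namespace IsMatrixUnits

variable [CommSemiring R] [Semiring B] [Algebra R A] [Algebra R B] {e : Matrix n n A}

/-- The algebra homomorphism `m ↦ ∑ i j, φ (m i j) * e i j` out of a matrix algebra defined by a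
homomorphism `φ` on the coefficients and a system of matrix units `e` commuting with its range. -/
def lift (he : IsMatrixUnits e) (φ : B →ₐ[R] A) (hφ : ∀ b i j, Commute (φ b) (e i j)) :
    Matrix n n B →ₐ[R] A :=
  AlgHom.ofLinearMap
    (Matrix.liftLinear R fun i j => LinearMap.mulRight R (e i j) ∘ₗ φ.toLinearMap)
    (by
      rw [Matrix.liftLinear_apply, ← he.trace_eq_one]
      simp [Matrix.one_apply, apply_ite φ, Matrix.trace])
    (by
      rw [LinearMap.map_mul_iff]
      refine Matrix.ext_linearMap _ fun i j => LinearMap.ext fun b => ?_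
      refine Matrix.ext_linearMap _ fun k l => LinearMap.ext fun c => ?_
      have mul_units : φ b * e i j * (φ c * e k l) = φ (b * c) * (e i j * e k l) := by
        rw [map_mul, mul_assoc, ← mul_assoc (e i j), ← (hφ c i j).eq, mul_assoc, mul_assoc]
      by_cases hjk : j = k
      · subst hjk
        simp [mul_units, he.mul_eq]
      · simp [mul_units, he.mul_eq, hjk])

@[simp]
theorem lift_single (he : IsMatrixUnits e) (φ : B →ₐ[R] A)
    (hφ : ∀ b i j, Commute (φ b) (e i j)) (i j : n) (b : B) :
    he.lift φ hφ (Matrix.single i j b) = φ b * e i j := by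
  simp [lift]

theorem lift_apply (he : IsMatrixUnits e) (φ : B →ₐ[R] A)
    (hφ : ∀ b i j, Commute (φ b) (e i j)) (m : Matrix n n B) :
    he.lift φ hφ m = ∑ i, ∑ j, φ (m i j) * e i j := by
  simp [lift, Matrix.liftLinear_apply]

theorem comp_lift_eq_id (he : IsMatrixUnits e) (φ : B →ₐ[R] A)
    (hφ : ∀ b i j, Commute (φ b) (e i j)) (ψ : A →ₐ[R] Matrix n n B)
    (hψφ : ψ.comp φ = Matrix.scalarAlgHom n R) (hψe : ∀ i j, ψ (e i j) = Matrix.single i j 1) :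
    ψ.comp (he.lift φ hφ) = AlgHom.id R _ := by
  refine AlgHom.toLinearMap_injective <| Matrix.ext_linearMap _ fun i j => LinearMap.ext fun b => ?_
  have hψφb : ψ (φ b) = Matrix.scalar n b := DFunLike.congr_fun hψφ b
  simp [hψφb, hψe, ← Matrix.smul_eq_diagonal_mul]

end IsMatrixUnits

end MatrixUnits

section HyperbolicPair

variable {A : Type*} [Ring A] {x y v : A}

/-- The Clifford relations satisfied by a basis `x, y` of the hyperbolic plane. -/
structure IsHyperbolicPair (x y : A) : Prop where
  left_mul_self : x * x = 0
  right_mul_self : y * y = 0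
  mul_add_mul_swap : x * y + y * x = 1

theorem commute_lie_of_anticommute (hvx : v * x = -(x * v)) (hvy : v * y = -(y * v)) :
    Commute v ⁅x, y⁆ := by
  have hxy : Commute v (x * y) := by
    rw [commute_iff_eq, ← mul_assoc, hvx, neg_mul, mul_assoc, hvy, mul_neg, neg_neg, mul_assoc]
  have hyx : Commute v (y * x) := by
    rw [commute_iff_eq, ← mul_assoc, hvy, neg_mul, mul_assoc, hvx, mul_neg, neg_neg, mul_assoc]
  exact hxy.sub_right hyx

namespace IsHyperbolicPair

theorem mul_mul_left (h : IsHyperbolicPair x y) : x * (y * x) = x := by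
  rw [eq_sub_of_add_eq' h.mul_add_mul_swap, mul_sub, ← mul_assoc, h.left_mul_self]
  simp

theorem symm (h : IsHyperbolicPair x y) : IsHyperbolicPair y x :=
  ⟨h.right_mul_self, h.left_mul_self, add_comm (y * x) _ ▸ h.mul_add_mul_swap⟩

theorem isMatrixUnits (h : IsHyperbolicPair x y) :
    IsMatrixUnits !![x * y, x; y, y * x] where
  mul_eq i j k l := by
    have xx (z : A) : x * (x * z) = 0 := by rw [← mul_assoc, h.left_mul_self, zero_mul]
    have yy (z : A) : y * (y * z) = 0 := by rw [← mul_assoc, h.right_mul_self, zero_mul]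
    fin_cases i <;> fin_cases j <;> fin_cases k <;> fin_cases l <;>
      simp [mul_assoc, xx, yy, h.left_mul_self, h.right_mul_self, h.mul_mul_left,
        h.symm.mul_mul_left]
  trace_eq_one := by simp [Matrix.trace_fin_two, h.mul_add_mul_swap]

theorem lie_mul_left (h : IsHyperbolicPair x y) : ⁅x, y⁆ * x = x := by
  rw [Ring.lie_def, sub_mul, mul_assoc, mul_assoc, h.left_mul_self, h.mul_mul_left, mul_zero,
    sub_zero]

theorem left_mul_lie (h : IsHyperbolicPair x y) : x * ⁅x, y⁆ = -x := by
  rw [Ring.lie_def, mul_sub, ← mul_assoc, h.left_mul_self, h.mul_mul_left, zero_mul, zero_sub]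

theorem lie_mul_self (h : IsHyperbolicPair x y) : ⁅x, y⁆ * ⁅x, y⁆ = 1 := by
  calc ⁅x, y⁆ * ⁅x, y⁆
      = ⁅x, y⁆ * x * y + ⁅y, x⁆ * y * x := by simp only [Ring.lie_def]; noncomm_ring
    _ = 1 := by rw [h.lie_mul_left, h.symm.lie_mul_left, h.mul_add_mul_swap]

theorem commute_mul_lie_left (h : IsHyperbolicPair x y) (hvx : v * x = -(x * v)) :
    Commute (v * ⁅x, y⁆) x := by
  calc v * ⁅x, y⁆ * x = v * x := by rw [mul_assoc, h.lie_mul_left]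
    _ = -(x * v) := hvx
    _ = x * (v * ⁅x, y⁆) := by
      rw [← mul_assoc, ← neg_eq_iff_eq_neg.mpr hvx, neg_mul, mul_assoc, h.left_mul_lie, mul_neg,
        neg_neg, hvx]

theorem commute_mul_lie_right (h : IsHyperbolicPair x y) (hvy : v * y = -(y * v)) :
    Commute (v * ⁅x, y⁆) y := by
  have hskew : ⁅x, y⁆ = -⁅y, x⁆ := (neg_sub _ _).symm
  rw [hskew, mul_neg]
  exact (h.symm.commute_mul_lie_left hvy).neg_left

theorem mul_lie_mul_mul_lie (h : IsHyperbolicPair x y) (hvx : v * x = -(x * v))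
    (hvy : v * y = -(y * v)) : v * ⁅x, y⁆ * (v * ⁅x, y⁆) = v * v := by
  rw [(commute_lie_of_anticommute hvx hvy).symm.mul_mul_mul_comm, h.lie_mul_self, mul_one]

end IsHyperbolicPair

end HyperbolicPair

section CliffordHyperbolic

open CliffordAlgebra

variable {R M : Type*} [CommRing R] [AddCommGroup M] [Module R M]

theorem commute_of_forall_commute_ι {A : Type*} [Semiring A] [Algebra R A] {Q₀ : QuadraticForm R M}
    (φ : CliffordAlgebra Q₀ →ₐ[R] A) {z : A} (h : ∀ v, Commute (φ (ι Q₀ v)) z)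
    (c : CliffordAlgebra Q₀) : Commute (φ c) z := by
  induction c using CliffordAlgebra.induction with
  | algebraMap r => rw [AlgHom.commutes]; exact Algebra.commute_algebraMap_left r z
  | ι v => exact h v
  | mul a b ha hb => simpa using ha.mul_left hb
  | add a b ha hb => simpa using ha.add_left hb

variable (R) in
/-- The hyperbolic plane `(a, b) ↦ a * b`, preferred to the form `a² - b²` because the two are
equivalent only when `2` is invertible. -/
def hyperbolicPlane : QuadraticForm R (R × R) :=
  QuadraticMap.linMulLin (LinearMap.fst R R R) (LinearMap.snd R R R)

@[simp]
theorem hyperbolicPlane_apply (u : R × R) : hyperbolicPlane R u = u.1 * u.2 := rfl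

theorem equivalent_hyperbolicPlane [Invertible (2 : R)] {a : R} (ha : IsUnit a) :
    ((a • QuadraticMap.sq (R := R)).prod (-a • QuadraticMap.sq)).Equivalent
      (hyperbolicPlane R) := by
  obtain ⟨_⟩ := ha.nonempty_invertible
  have half_two : ⅟2 * 2 = (1 : R) := invOf_mul_self 2
  have a_inv : a * ⅟a = 1 := mul_invOf_self a
  exact ⟨{
    toFun u := (a * (u.1 - u.2), u.1 + u.2)
    invFun u := (⅟2 * (u.2 + ⅟a * u.1), ⅟2 * (u.2 - ⅟a * u.1))
    map_add' u v := by ext <;> dsimp <;> ring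
    map_smul' r u := by ext <;> dsimp <;> ring
    left_inv u := by
      ext
      · linear_combination u.1 * half_two + ⅟2 * (u.1 - u.2) * a_inv
      · linear_combination u.2 * half_two - ⅟2 * (u.1 - u.2) * a_inv
    right_inv u := by
      ext
      · linear_combination u.1 * half_two * a * ⅟a + u.1 * a_inv
      · linear_combination u.2 * half_two
    map_app' u := by
      change a * (u.1 - u.2) * (u.1 + u.2) = a * (u.1 * u.1) + -a * (u.2 * u.2)
      ring }⟩

namespace hyperbolicPlane

variable (Q₀ : QuadraticForm R M)

/-- The linear map `(v, a, b) ↦ !![v, a; b, -v]`, whose square is the quadratic form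
`Q₀.prod (hyperbolicPlane R)`. -/
def toMatrixLinear : M × (R × R) →ₗ[R] Matrix (Fin 2) (Fin 2) (CliffordAlgebra Q₀) where
  toFun u := !![ι Q₀ u.1, algebraMap R _ u.2.1; algebraMap R _ u.2.2, -ι Q₀ u.1]
  map_add' u v := by
    ext i j
    fin_cases i <;> fin_cases j <;> simp [add_comm]
  map_smul' r u := by
    ext i j
    fin_cases i <;> fin_cases j <;> simp [Algebra.smul_def]

theorem toMatrixLinear_apply (u : M × (R × R)) : toMatrixLinear Q₀ u =
    !![ι Q₀ u.1, algebraMap R _ u.2.1; algebraMap R _ u.2.2, -ι Q₀ u.1] := rfl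

theorem toMatrixLinear_mul_self (u : M × (R × R)) :
    toMatrixLinear Q₀ u * toMatrixLinear Q₀ u =
      algebraMap R _ (Q₀.prod (hyperbolicPlane R) u) := by
  rw [toMatrixLinear_apply, Matrix.mul_fin_two, Matrix.algebraMap_eq_diagonal]
  ext i j
  have ι_mul_scalar (r : R) : ι Q₀ u.1 * algebraMap R _ r = algebraMap R _ r * ι Q₀ u.1 :=
    (Algebra.commutes r _).symm
  fin_cases i <;> fin_cases j
  · simp [ι_sq_scalar]
  · simp [ι_mul_scalar]
  · simp [ι_mul_scalar]
  · simp [ι_sq_scalar, add_comm, Algebra.commutes u.2.2]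

/-- The homomorphism `Cl(Q₀ ⊕ H) → M₂(Cl(Q₀))` extending `toMatrixLinear`. -/
def toMatrix :
    CliffordAlgebra (Q₀.prod (hyperbolicPlane R)) →ₐ[R]
      Matrix (Fin 2) (Fin 2) (CliffordAlgebra Q₀) :=
  CliffordAlgebra.lift _ ⟨toMatrixLinear Q₀, toMatrixLinear_mul_self Q₀⟩

@[simp]
theorem toMatrix_ι (u : M × (R × R)) :
    toMatrix Q₀ (ι _ u) = !![ι Q₀ u.1, algebraMap R _ u.2.1; algebraMap R _ u.2.2, -ι Q₀ u.1] := by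
  simp [toMatrix, toMatrixLinear_apply]

/-- The vector `(1, 0)` of the hyperbolic plane, as an element of `Cl(Q₀ ⊕ H)`. -/
def left : CliffordAlgebra (Q₀.prod (hyperbolicPlane R)) := ι _ (0, (1, 0))

/-- The vector `(0, 1)` of the hyperbolic plane, as an element of `Cl(Q₀ ⊕ H)`. -/
def right : CliffordAlgebra (Q₀.prod (hyperbolicPlane R)) := ι _ (0, (0, 1))

theorem isHyperbolicPair_left_right : IsHyperbolicPair (left Q₀) (right Q₀) where
  left_mul_self := by simp [left, ι_sq_scalar]
  right_mul_self := by simp [right, ι_sq_scalar]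
  mul_add_mul_swap := by simp [left, right, ι_mul_ι_add_swap, QuadraticMap.polar]

theorem ι_inl_mul_ι_inr (v : M) (u : R × R) :
    ι (Q₀.prod (hyperbolicPlane R)) (v, 0) * ι _ (0, u) = -(ι _ (0, u) * ι _ (v, 0)) :=
  ι_mul_ι_comm_of_isOrtho (.inl_inr v u)

/-- The embedding `Cl(Q₀) → Cl(Q₀ ⊕ H)` given on vectors by `v ↦ v * ⁅x, y⁆`, where `x, y`
is the basis of the hyperbolic plane `H`. The twist by `⁅x, y⁆` makes the range commute with
`x` and `y`, which the obvious embedding does not. -/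
def twistedInl : CliffordAlgebra Q₀ →ₐ[R] CliffordAlgebra (Q₀.prod (hyperbolicPlane R)) :=
  CliffordAlgebra.lift Q₀
    ⟨LinearMap.mulRight R ⁅left Q₀, right Q₀⁆ ∘ₗ ι _ ∘ₗ LinearMap.inl R M (R × R), fun v => by
      have hsq := (isHyperbolicPair_left_right Q₀).mul_lie_mul_mul_lie
        (ι_inl_mul_ι_inr Q₀ v (1, 0)) (ι_inl_mul_ι_inr Q₀ v (0, 1))
      simpa [ι_sq_scalar] using hsq⟩

@[simp]
theorem twistedInl_ι (v : M) :
    twistedInl Q₀ (ι Q₀ v) = ι _ (v, 0) * ⁅left Q₀, right Q₀⁆ := by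
  simp [twistedInl]

theorem commute_twistedInl_left (c : CliffordAlgebra Q₀) : Commute (twistedInl Q₀ c) (left Q₀) := by
  refine commute_of_forall_commute_ι _ (fun v => ?_) c
  rw [twistedInl_ι]
  exact (isHyperbolicPair_left_right Q₀).commute_mul_lie_left (ι_inl_mul_ι_inr Q₀ v _)

theorem commute_twistedInl_right (c : CliffordAlgebra Q₀) :
    Commute (twistedInl Q₀ c) (right Q₀) := by
  refine commute_of_forall_commute_ι _ (fun v => ?_) c
  rw [twistedInl_ι]
  exact (isHyperbolicPair_left_right Q₀).commute_mul_lie_right (ι_inl_mul_ι_inr Q₀ v _)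

theorem commute_twistedInl_matrixUnits (c : CliffordAlgebra Q₀) (i j : Fin 2) :
    Commute (twistedInl Q₀ c)
      (!![left Q₀ * right Q₀, left Q₀; right Q₀, right Q₀ * left Q₀] i j) := by
  have hl := commute_twistedInl_left Q₀ c
  have hr := commute_twistedInl_right Q₀ c
  fin_cases i <;> fin_cases j
  exacts [hl.mul_right hr, hl, hr, hr.mul_right hl]

/-- The homomorphism `M₂(Cl(Q₀)) → Cl(Q₀ ⊕ H)` inverse to `toMatrix`. -/
def ofMatrix :
    Matrix (Fin 2) (Fin 2) (CliffordAlgebra Q₀) →ₐ[R]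
      CliffordAlgebra (Q₀.prod (hyperbolicPlane R)) :=
  (isHyperbolicPair_left_right Q₀).isMatrixUnits.lift (twistedInl Q₀)
    (commute_twistedInl_matrixUnits Q₀)

theorem ofMatrix_apply (m : Matrix (Fin 2) (Fin 2) (CliffordAlgebra Q₀)) :
    ofMatrix Q₀ m =
      twistedInl Q₀ (m 0 0) * (left Q₀ * right Q₀) + twistedInl Q₀ (m 0 1) * left Q₀ +
        (twistedInl Q₀ (m 1 0) * right Q₀ + twistedInl Q₀ (m 1 1) * (right Q₀ * left Q₀)) := by
  simp [ofMatrix, IsMatrixUnits.lift_apply]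

@[simp]
theorem toMatrix_left : toMatrix Q₀ (left Q₀) = !![0, 1; 0, 0] := by simp [left]

@[simp]
theorem toMatrix_right : toMatrix Q₀ (right Q₀) = !![0, 0; 1, 0] := by simp [right]

theorem toMatrix_comp_twistedInl :
    (toMatrix Q₀).comp (twistedInl Q₀) = Matrix.scalarAlgHom (Fin 2) R := by
  ext v i j
  fin_cases i <;> fin_cases j <;> simp [Ring.lie_def]

theorem toMatrix_comp_ofMatrix : (toMatrix Q₀).comp (ofMatrix Q₀) = AlgHom.id R _ := by
  refine IsMatrixUnits.comp_lift_eq_id _ _ _ _ (toMatrix_comp_twistedInl Q₀) fun i j => ?_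
  ext k l
  fin_cases i <;> fin_cases j <;> fin_cases k <;> fin_cases l <;> simp

theorem ofMatrix_comp_toMatrix : (ofMatrix Q₀).comp (toMatrix Q₀) = AlgHom.id R _ := by
  ext v
  · have hsq := (isHyperbolicPair_left_right Q₀).lie_mul_self
    simp [ofMatrix_apply, ← sub_eq_add_neg, ← mul_sub, ← Ring.lie_def, mul_assoc, hsq]
  · simp [ofMatrix_apply, left]
  · simp [ofMatrix_apply, right]

/-- `Cl(Q₀ ⊕ H) ≃ M₂(Cl(Q₀))` for the hyperbolic plane `H`. -/
def matrixEquiv :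
    CliffordAlgebra (Q₀.prod (hyperbolicPlane R)) ≃ₐ[R]
      Matrix (Fin 2) (Fin 2) (CliffordAlgebra Q₀) :=
  AlgEquiv.ofAlgHom (toMatrix Q₀) (ofMatrix Q₀) (toMatrix_comp_ofMatrix Q₀)
    (ofMatrix_comp_toMatrix Q₀)

end hyperbolicPlane

end CliffordHyperbolic

section Signature

open QuadraticMap

theorem prod_assoc_equivalent {R M₁ M₂ M₃ P : Type*} [CommSemiring R] [AddCommMonoid M₁]
    [AddCommMonoid M₂] [AddCommMonoid M₃] [AddCommMonoid P] [Module R M₁] [Module R M₂]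
    [Module R M₃] [Module R P] (Q₁ : QuadraticMap R M₁ P) (Q₂ : QuadraticMap R M₂ P)
    (Q₃ : QuadraticMap R M₃ P) : ((Q₁.prod Q₂).prod Q₃).Equivalent (Q₁.prod (Q₂.prod Q₃)) :=
  ⟨{ LinearEquiv.prodAssoc R M₁ M₂ M₃ with map_app' := fun u => by simp [add_assoc] }⟩

theorem weightedSumSquares_equivalent_prod {R ι κ : Type*} [CommSemiring R] [Fintype ι]
    [Fintype κ] (e : Option ι ≃ κ) (w : κ → R) :
    (weightedSumSquares R w).Equivalent
      ((weightedSumSquares R fun i => w (e (some i))).prod (w (e none) • QuadraticMap.sq)) :=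
  ⟨{ LinearEquiv.funCongrLeft R R e ≪≫ₗ LinearEquiv.piOptionEquivProd R ≪≫ₗ
      LinearEquiv.prodComm R _ _ with
    map_app' := fun u => by
      simp [weightedSumSquares_apply, ← e.sum_comp, Fintype.sum_option, add_comm,
        LinearEquiv.piOptionEquivProd] }⟩

theorem Q_succ_left_equivalent (p q : ℕ) :
    (Q (p + 1) q).Equivalent ((Q p q).prod ((1 : ℝ) • QuadraticMap.sq)) := by
  have hdim : p + q + 1 = p + 1 + q := by omega
  simpa [Q] using weightedSumSquares_equivalent_prod
    ((finSuccEquiv (p + q)).symm.trans (finCongr hdim))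
    fun i : Fin (p + 1 + q) => if (i : ℕ) < p + 1 then (1 : ℝ) else -1

theorem Q_succ_right_equivalent (p q : ℕ) :
    (Q p (q + 1)).Equivalent ((Q p q).prod ((-1 : ℝ) • QuadraticMap.sq)) := by
  simpa [Q] using weightedSumSquares_equivalent_prod
    (κ := Fin (p + (q + 1))) (finSuccEquivLast (n := p + q)).symm
    fun i => if (i : ℕ) < p then (1 : ℝ) else -1

theorem Q_succ_succ_equivalent (p q : ℕ) :
    (Q (p + 1) (q + 1)).Equivalent ((Q p q).prod (hyperbolicPlane ℝ)) :=
  (Q_succ_right_equivalent (p + 1) q).trans <|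
    ((Q_succ_left_equivalent p q).prod (.refl _)).trans <|
      (prod_assoc_equivalent _ _ _).trans <|
        (Equivalent.refl _).prod (equivalent_hyperbolicPlane isUnit_one)

end Signature

theorem nonempty_G_succ_succ_algEquiv_matrix (p q : ℕ) :
    Nonempty (G (p + 1) (q + 1) ≃ₐ[ℝ] Matrix (Fin 2) (Fin 2) (G p q)) := by
  obtain ⟨e⟩ := Q_succ_succ_equivalent p q
  exact ⟨(CliffordAlgebra.equivOfIsometry e).trans (hyperbolicPlane.matrixEquiv (Q p q))⟩

theorem G_p4q4_iso_matrix16_general (p q n : ℕ) :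
    Nonempty (G (p + n) (q + n) ≃ₐ[ℝ] Matrix (Fin (2 ^ n)) (Fin (2 ^ n)) (G p q)) := by
  induction n with
  | zero => exact ⟨(Matrix.uniqueAlgEquiv (m := Unit)).symm.trans <|
      Matrix.reindexAlgEquiv ℝ (G p q) (Equiv.ofUnique Unit (Fin 1))⟩
  | succ n ih =>
    obtain ⟨e⟩ := ih
    obtain ⟨step⟩ := nonempty_G_succ_succ_algEquiv_matrix (p + n) (q + n)
    have hcard : 2 * 2 ^ n = 2 ^ (n + 1) := (pow_succ' 2 n).symm
    exact ⟨step.trans <| e.mapMatrix.trans <|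
      (Matrix.compAlgEquiv (Fin 2) (Fin (2 ^ n)) (G p q) ℝ).trans <|
        Matrix.reindexAlgEquiv ℝ (G p q) (finProdFinEquiv.trans (finCongr hcard))⟩

theorem G_p4q4_iso_matrix16 (p q : ℕ) :
    Nonempty (G (p + 4) (q + 4) ≃ₐ[ℝ] Matrix (Fin 16) (Fin 16) (G p q)) :=
  G_p4q4_iso_matrix16_general p q 4
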